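/- For any κ > 0, the map ψ ↦ T(ψ,κ) is strictly monotonically decreasing on (ψ↓(κ), ∞), and it satisfies lim_{ψ→∞} T(ψ,κ) < 0 < lim_{ψ↓ψ↓(κ)} T(ψ,κ). -/

import Mathlib

open MeasureTheory ProbabilityTheory Real Filter Set Topology

noncomputable section

namespace MaxMargin

/-- The standard Gaussian measure on `ℝ`. -/
def stdG : Measure ℝ := gaussianReal 0 1

/-- The function `F_κ(c₁,c₂) = (E[((κ − c₁·Y·G − c₂·Z)₊)²])^{1/2}` where `G, Z` are independent
standard Gaussians and, conditionally on `G`, `Y ∈ {+1,−1}` with `P(Y = +1 | G) = f(G)`. -/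
def Fk (f : ℝ → ℝ) (κ c₁ c₂ : ℝ) : ℝ :=
  Real.sqrt (∫ g, ∫ z,
    (f g * (max (κ - c₁ * g - c₂ * z) 0) ^ 2
      + (1 - f g) * (max (κ + c₁ * g - c₂ * z) 0) ^ 2) ∂stdG ∂stdG)

/-- Non-degeneracy of `f`: the variable `T = Y·G` satisfies `P(T < x) > 0` and `P(T > x) > 0`
for every `x ∈ ℝ`. -/
def NonDeg (f : ℝ → ℝ) : Prop :=
  ∀ x : ℝ,
    (0 < ∫ g, (f g * (if g < x then (1:ℝ) else 0)
          + (1 - f g) * (if -g < x then (1:ℝ) else 0)) ∂stdG) ∧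
    (0 < ∫ g, (f g * (if x < g then (1:ℝ) else 0)
          + (1 - f g) * (if x < -g then (1:ℝ) else 0)) ∂stdG)


/-- Points of `ℝ³` carrying the coordinates `(G, X, W)`. -/
abbrev Pt : Type := ℝ × ℝ × ℝ

/-- First coordinate `G`. -/
def Gc : Pt → ℝ := fun q => q.1

/-- Second coordinate `X`. -/
def Xc : Pt → ℝ := fun q => q.2.1

/-- Third coordinate `W`. -/
def Wc : Pt → ℝ := fun q => q.2.2

/-- The inner product `⟨h₁,h₂⟩_P = E_P[h₁h₂]`. -/
def ip (P : Measure Pt) (h₁ h₂ : Pt → ℝ) : ℝ := ∫ q, h₁ q * h₂ q ∂P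

/-- The norm `‖h‖_P = ⟨h,h⟩_P^{1/2}`. -/
def pnorm (P : Measure Pt) (h : Pt → ℝ) : ℝ := Real.sqrt (ip P h h)

/-- Projection onto the orthogonal complement of `W`: `Π_{W⊥}(h) = h − ⟨h,W⟩_P·W`. -/
def projW (P : Measure Pt) (h : Pt → ℝ) : Pt → ℝ := fun q => h q - ip P h Wc * Wc q

/-- Partial derivative of `F_κ` in its first argument. -/
def d1F (f : ℝ → ℝ) (κ c₁ c₂ : ℝ) : ℝ := deriv (fun t => Fk f κ t c₂) c₁

/-- Partial derivative of `F_κ` in its second argument. -/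
def d2F (f : ℝ → ℝ) (κ c₁ c₂ : ℝ) : ℝ := deriv (fun t => Fk f κ c₁ t) c₂

/-- `ψ*(0) = min_{c ∈ ℝ} F₀(c,1)²`. -/
def psiStar0 (f : ℝ → ℝ) : ℝ := ⨅ c : ℝ, (Fk f 0 c 1) ^ 2

/-- The functional `𝓡_{ψ,κ,P}(h) = ψ^{−1/2}·F_κ(⟨h, X^{1/2}W⟩_P, ‖Π_{W⊥}(X^{1/2}h)‖_P)
+ ⟨h, X^{1/2}·Π_{W⊥}(G)⟩_P`. -/
def Rfun (f : ℝ → ℝ) (P : Measure Pt) (ψ κ : ℝ) (h : Pt → ℝ) : ℝ :=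
  (Real.sqrt ψ)⁻¹ *
      Fk f κ (ip P h (fun q => Real.sqrt (Xc q) * Wc q))
        (pnorm P (projW P (fun q => Real.sqrt (Xc q) * h q)))
    + ip P h (fun q => Real.sqrt (Xc q) * projW P Gc q)

/-- `ζ(P) = ‖X^{−1/2}W‖_P^{−1}`. -/
def zetaP (P : Measure Pt) : ℝ := (pnorm P (fun q => (Real.sqrt (Xc q))⁻¹ * Wc q))⁻¹

/-- `ζ = (E_μ[X⁻¹W²])^{−1/2}` for `(X,W) ~ μ`. -/
def zetaMu (μ : Measure (ℝ × ℝ)) : ℝ := (Real.sqrt (∫ q, (q.1)⁻¹ * q.2 ^ 2 ∂μ))⁻¹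

/-- `ω = (E_μ[(1 − ζ²X⁻¹)²W²])^{1/2}`. -/
def omegaMu (μ : Measure (ℝ × ℝ)) : ℝ :=
  Real.sqrt (∫ q, (1 - (zetaMu μ) ^ 2 * (q.1)⁻¹) ^ 2 * q.2 ^ 2 ∂μ)

/-- `ψ₊(κ)`. -/
def psiPlus (f : ℝ → ℝ) (μ : Measure (ℝ × ℝ)) (κ : ℝ) : ℝ :=
  if 0 < d1F f κ (zetaMu μ) 0 then 0
  else (d2F f κ (zetaMu μ) 0) ^ 2 - (omegaMu μ) ^ 2 * (d1F f κ (zetaMu μ) 0) ^ 2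

/-- `ψ₋(κ)`. -/
def psiMinus (f : ℝ → ℝ) (μ : Measure (ℝ × ℝ)) (κ : ℝ) : ℝ :=
  if 0 < d1F f κ (-(zetaMu μ)) 0 then 0
  else (d2F f κ (-(zetaMu μ)) 0) ^ 2 - (omegaMu μ) ^ 2 * (d1F f κ (-(zetaMu μ)) 0) ^ 2

/-- `ψ↓(κ) = max{ψ*(0), ψ₊(κ), ψ₋(κ)}`. -/
def psiDown (f : ℝ → ℝ) (μ : Measure (ℝ × ℝ)) (κ : ℝ) : ℝ :=
  max (max (psiStar0 f) (psiPlus f μ κ)) (psiMinus f μ κ)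

/-- The system of equations with expectations over `(X,W) ~ μ`:
with `A = ∂₁F_κ(c₁,c₂) − c₁c₂⁻¹∂₂F_κ(c₁,c₂)` and
`D = c₂⁻¹∂₂F_κ(c₁,c₂)·X^{1/2} + ψ^{1/2}·s·X^{−1/2}`,
`−c₁ = E_μ[A·W²·X^{1/2}/D]`, `c₁² + c₂² = E_μ[(ψX + A²W²X)/D²]`, `1 = E_μ[(ψ + A²W²)/D²]`. -/
def SolSysMu (f : ℝ → ℝ) (μ : Measure (ℝ × ℝ)) (ψ κ c₁ c₂ s : ℝ) : Prop :=
  (-c₁ = ∫ q, (d1F f κ c₁ c₂ - c₁ * c₂⁻¹ * d2F f κ c₁ c₂) * q.2 ^ 2 * Real.sqrt q.1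
      / (c₂⁻¹ * d2F f κ c₁ c₂ * Real.sqrt q.1 + Real.sqrt ψ * s * (Real.sqrt q.1)⁻¹) ∂μ)
  ∧ (c₁ ^ 2 + c₂ ^ 2 = ∫ q,
      (ψ * q.1 + (d1F f κ c₁ c₂ - c₁ * c₂⁻¹ * d2F f κ c₁ c₂) ^ 2 * q.2 ^ 2 * q.1)
      / (c₂⁻¹ * d2F f κ c₁ c₂ * Real.sqrt q.1 + Real.sqrt ψ * s * (Real.sqrt q.1)⁻¹) ^ 2 ∂μ)
  ∧ (1 = ∫ q,
      (ψ + (d1F f κ c₁ c₂ - c₁ * c₂⁻¹ * d2F f κ c₁ c₂) ^ 2 * q.2 ^ 2)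
      / (c₂⁻¹ * d2F f κ c₁ c₂ * Real.sqrt q.1 + Real.sqrt ψ * s * (Real.sqrt q.1)⁻¹) ^ 2 ∂μ)

/-- `T(ψ,κ) = ψ^{−1/2}(F_κ(c₁,c₂) − c₁∂₁F_κ(c₁,c₂) − c₂∂₂F_κ(c₁,c₂)) − s`. -/
def Tval (f : ℝ → ℝ) (ψ κ c₁ c₂ s : ℝ) : ℝ :=
  (Real.sqrt ψ)⁻¹ * (Fk f κ c₁ c₂ - c₁ * d1F f κ c₁ c₂ - c₂ * d2F f κ c₁ c₂) - s

section L2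

variable {Ω : Type*} [MeasurableSpace Ω] {M : Measure Ω}

lemma imul {x y : Ω → ℝ} (hx : MemLp x 2 M) (hy : MemLp y 2 M) :
    Integrable (fun w => x w * y w) M := hx.integrable_mul hy

lemma isq {x : Ω → ℝ} (hx : MemLp x 2 M) : Integrable (fun w => x w ^ 2) M := by
  simpa [sq] using imul hx hx

lemma posL2 {x : Ω → ℝ} (hx : MemLp x 2 M) : MemLp (fun w => max (x w) 0) 2 M := hx.pos_part

lemma cs_int {x y : Ω → ℝ} (hx : MemLp x 2 M) (hy : MemLp y 2 M) :
    ∫ w, x w * y w ∂M ≤ Real.sqrt (∫ w, x w ^ 2 ∂M) * Real.sqrt (∫ w, y w ^ 2 ∂M) := by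
  set a := ∫ w, x w ^ 2 ∂M with ha
  set b := ∫ w, y w ^ 2 ∂M with hb
  set m := ∫ w, x w * y w ∂M with hm
  have ha0 : 0 ≤ a := integral_nonneg fun w => sq_nonneg _
  have hb0 : 0 ≤ b := integral_nonneg fun w => sq_nonneg _
  have key : ∀ s t : ℝ, 0 ≤ s ^ 2 * a - 2 * s * t * m + t ^ 2 * b := by
    intro s t
    have h0 : 0 ≤ ∫ w, (s * x w - t * y w) ^ 2 ∂M := integral_nonneg fun w => sq_nonneg _
    have h1 : ∫ w, (s * x w - t * y w) ^ 2 ∂M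
        = s ^ 2 * a - 2 * s * t * m + t ^ 2 * b := by
      rw [ha, hb, hm, ← integral_const_mul, ← integral_const_mul, ← integral_const_mul,
        ← integral_sub, ← integral_add]
      · congr 1; ext w; ring
      · exact ((isq hx).const_mul _).sub ((imul hx hy).const_mul _)
      · exact (isq hy).const_mul _
      · exact (isq hx).const_mul _
      · exact (imul hx hy).const_mul _
    linarith
  rw [← Real.sqrt_mul ha0]
  apply Real.le_sqrt_of_sq_le
  rcases ha0.eq_or_lt with h | h
  · by_contra hc
    push Not at hc
    have h2 := key ((b + 1) / m) 1
    have hm0 : m ≠ 0 := by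
      rintro h; rw [h] at hc; nlinarith
    rw [← h] at h2
    have : 2 * ((b + 1) / m) * 1 * m = 2 * (b + 1) := by field_simp
    rw [this] at h2
    linarith
  · have h2 := key m a
    nlinarith

lemma pos_sq_taylor (x δ : ℝ) :
    |(max (x + δ) 0) ^ 2 - (max x 0) ^ 2 - 2 * max x 0 * δ| ≤ δ ^ 2 := by
  rw [abs_le]
  rcases le_total (x + δ) 0 with h | h <;> rcases le_total x 0 with h' | h' <;>
    simp only [h, h', max_eq_left, max_eq_right] <;> constructor <;> nlinarith

lemma V_deriv {x d : Ω → ℝ} (hx : MemLp x 2 M) (hd : MemLp d 2 M) (t₀ : ℝ) :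
    HasDerivAt (fun t => ∫ w, (max (x w + (t - t₀) * d w) 0) ^ 2 ∂M)
      (2 * ∫ w, max (x w) 0 * d w ∂M) t₀ := by
  rw [hasDerivAt_iff_isLittleO]
  refine Asymptotics.IsBigO.trans_isLittleO (g := fun t => ‖t - t₀‖ ^ 2) ?_
    (Asymptotics.isLittleO_pow_sub_sub t₀ (by norm_num))
  refine Asymptotics.IsBigO.of_bound (∫ w, d w ^ 2 ∂M) (Eventually.of_forall fun t => ?_)
  have i1 : Integrable (fun w => (max (x w + (t - t₀) * d w) 0) ^ 2) M :=
    isq (posL2 (hx.add (hd.const_mul (t - t₀))))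
  have i2 : Integrable (fun w => (max (x w) 0) ^ 2) M := isq (posL2 hx)
  have i3 : Integrable (fun w => max (x w) 0 * d w) M := imul (posL2 hx) hd
  have i12 : Integrable (fun w => (max (x w + (t - t₀) * d w) 0) ^ 2 - (max (x w) 0) ^ 2) M :=
    i1.sub i2
  have e : (∫ w, (max (x w + (t - t₀) * d w) 0) ^ 2 ∂M)
      - (∫ w, (max (x w + (t₀ - t₀) * d w) 0) ^ 2 ∂M)
      - (t - t₀) • (2 * ∫ w, max (x w) 0 * d w ∂M)
      = ∫ w, ((max (x w + (t - t₀) * d w) 0) ^ 2 - (max (x w) 0) ^ 2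
          - 2 * max (x w) 0 * ((t - t₀) * d w)) ∂M := by
    rw [smul_eq_mul, ← mul_assoc, ← integral_const_mul]
    simp only [sub_self, zero_mul, add_zero]
    rw [← integral_sub i1 i2, ← integral_sub i12 (i3.const_mul _)]
    congr 1; ext w; ring
  rw [e]
  calc _ ≤ ∫ w, ((t - t₀) * d w) ^ 2 ∂M := by
        refine norm_integral_le_of_norm_le (isq (hd.const_mul _)) (ae_of_all _ fun w => ?_)
        exact pos_sq_taylor _ _
    _ = _ := by
        simp only [mul_pow]
        rw [integral_const_mul, mul_comm]
        simp

end L2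

/-- the law of `T = Y G`. -/
def nuT (φ : ℝ → ℝ) : Measure ℝ :=
  (stdG.withDensity (fun g => ENNReal.ofReal (φ g)))
    + (stdG.withDensity (fun g => ENNReal.ofReal (1 - φ g))).map (fun g => -g)

instance : IsProbabilityMeasure stdG := by unfold stdG; infer_instance

lemma stdG_neg : stdG.map (fun x => -x) = stdG := by
  unfold stdG; rw [gaussianReal_map_neg]; simp

lemma nuT_le {φ : ℝ → ℝ} (h01 : ∀ x, φ x ∈ Set.Icc (0:ℝ) 1) :
    nuT φ ≤ stdG + stdG := by
  unfold nuT
  refine add_le_add ?_ ?_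
  · conv_rhs => rw [← withDensity_one (μ := stdG)]
    refine withDensity_mono (ae_of_all _ fun x => ?_)
    simpa using (h01 x).2
  · conv_rhs => rw [← stdG_neg]
    refine Measure.map_mono ?_ (by fun_prop)
    conv_rhs => rw [← withDensity_one (μ := stdG)]
    refine withDensity_mono (ae_of_all _ fun x => ?_)
    simpa using (h01 x).1

lemma nuT_finite {φ : ℝ → ℝ} (h01 : ∀ x, φ x ∈ Set.Icc (0:ℝ) 1) :
    IsFiniteMeasure (nuT φ) := isFiniteMeasure_of_le _ (nuT_le h01)

lemma id_L2 : MemLp (fun x : ℝ => x) 2 stdG := memLp_id_gaussianReal' 2 (by norm_num)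

lemma id_L2_nu {φ : ℝ → ℝ} (h01 : ∀ x, φ x ∈ Set.Icc (0:ℝ) 1) :
    MemLp (fun x : ℝ => x) 2 (nuT φ) := by
  refine MemLp.mono_measure (nuT_le h01) ?_
  rw [show stdG + stdG = (2 : ENNReal) • stdG by rw [two_smul]]
  exact id_L2.smul_measure (by norm_num)

lemma integral_nuT {φ : ℝ → ℝ} (hφ : Measurable φ) (h01 : ∀ x, φ x ∈ Set.Icc (0:ℝ) 1)
    {H : ℝ → ℝ} (hH : Integrable H (nuT φ)) :
    ∫ t, H t ∂(nuT φ) = ∫ g, (φ g * H g + (1 - φ g) * H (-g)) ∂stdG := by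
  have h1 := hH
  unfold nuT at h1
  rw [integrable_add_measure] at h1
  obtain ⟨ha, hb⟩ := h1
  unfold nuT
  rw [integral_add_measure ha hb]
  have mneg : Measurable (fun g : ℝ => -g) := by fun_prop
  have hb' := (integrable_map_measure hb.1 mneg.aemeasurable).1 hb
  rw [integral_map mneg.aemeasurable hb.1]
  rw [integrable_withDensity_iff_integrable_smul' (by fun_prop) (by simp)] at ha hb'
  simp only [Function.comp] at hb'
  rw [integral_withDensity_eq_integral_toReal_smul (by fun_prop) (by simp),
    integral_withDensity_eq_integral_toReal_smul (by fun_prop) (by simp), ← integral_add ha hb']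
  refine integral_congr_ae (ae_of_all _ fun g => ?_)
  have := (h01 g).1
  have := (h01 g).2
  simp only [smul_eq_mul]
  rw [ENNReal.toReal_ofReal (by linarith), ENNReal.toReal_ofReal (by linarith)]

section MM
variable {φ : ℝ → ℝ}

/-- joint law of `(T, Z)`. -/
def MM (φ : ℝ → ℝ) : Measure (ℝ × ℝ) := (nuT φ).prod stdG

/-- affine form. -/
def aff (κ c₁ c₂ : ℝ) : ℝ × ℝ → ℝ := fun p => κ - c₁ * p.1 - c₂ * p.2

lemma fst_L2 (h01 : ∀ x, φ x ∈ Set.Icc (0:ℝ) 1) :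
    MemLp (fun p : ℝ × ℝ => p.1) 2 (MM φ) := by
  have := nuT_finite h01
  exact (id_L2_nu h01).comp_fst stdG

lemma snd_L2 (h01 : ∀ x, φ x ∈ Set.Icc (0:ℝ) 1) :
    MemLp (fun p : ℝ × ℝ => p.2) 2 (MM φ) := by
  have := nuT_finite h01
  exact id_L2.comp_snd (nuT φ)

lemma aff_L2 (h01 : ∀ x, φ x ∈ Set.Icc (0:ℝ) 1) (κ c₁ c₂ : ℝ) :
    MemLp (aff κ c₁ c₂) 2 (MM φ) := by
  have := nuT_finite h01
  have : IsFiniteMeasure (MM φ) := by unfold MM; infer_instance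
  exact ((memLp_const κ).sub ((fst_L2 h01).const_mul c₁)).sub ((snd_L2 h01).const_mul c₂)

/-- `F²` as an integral over the joint law. -/
def VV (φ : ℝ → ℝ) (κ c₁ c₂ : ℝ) : ℝ := ∫ p, (max (aff κ c₁ c₂ p) 0) ^ 2 ∂(MM φ)

lemma VV_nonneg (κ c₁ c₂ : ℝ) : 0 ≤ VV φ κ c₁ c₂ := integral_nonneg fun _ => sq_nonneg _

lemma Fk_eq (hφ : Measurable φ) (h01 : ∀ x, φ x ∈ Set.Icc (0:ℝ) 1) (κ c₁ c₂ : ℝ) :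
    Fk φ κ c₁ c₂ = Real.sqrt (VV φ κ c₁ c₂) := by
  have := nuT_finite h01
  unfold Fk VV
  congr 1
  have hi : Integrable (fun p => (max (aff κ c₁ c₂ p) 0) ^ 2) ((nuT φ).prod stdG) :=
    isq (posL2 (aff_L2 h01 κ c₁ c₂))
  have hz : ∀ a : ℝ, Integrable (fun z => (max (a - c₂ * z) 0) ^ 2) stdG := fun a =>
    isq (posL2 ((memLp_const a).sub (id_L2.const_mul c₂)))
  unfold MM
  rw [integral_prod _ hi, integral_nuT hφ h01 hi.integral_prod_left]
  refine integral_congr_ae (ae_of_all _ fun g => ?_)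
  simp only
  rw [integral_add ((hz _).const_mul _) ((hz _).const_mul _), integral_const_mul,
    integral_const_mul]
  simp [aff]

lemma VV_even (κ c₁ c₂ : ℝ) (h01 : ∀ x, φ x ∈ Set.Icc (0:ℝ) 1) :
    VV φ κ c₁ (-c₂) = VV φ κ c₁ c₂ := by
  have := nuT_finite h01
  unfold VV MM
  rw [integral_prod _ (isq (posL2 (aff_L2 h01 _ _ _))),
    integral_prod _ (isq (posL2 (aff_L2 h01 _ _ _)))]
  refine integral_congr_ae (ae_of_all _ fun t => ?_)
  simp only
  conv_lhs => rw [← stdG_neg]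
  rw [integral_map (by fun_prop) (by unfold aff; fun_prop)]
  simp [aff]

end MM

section Fprops
variable {φ : ℝ → ℝ}

lemma VV_ge_zero (h01 : ∀ x, φ x ∈ Set.Icc (0:ℝ) 1) (κ c₁ c₂ : ℝ) :
    VV φ κ c₁ 0 ≤ VV φ κ c₁ c₂ := by
  have h : 2 * VV φ κ c₁ 0 ≤ VV φ κ c₁ c₂ + VV φ κ c₁ (-c₂) := by
    unfold VV
    have i := fun c₂ => isq (posL2 (aff_L2 h01 κ c₁ c₂))
    rw [← integral_add (i _) (i _), ← integral_const_mul]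
    refine integral_mono ((i 0).const_mul 2) ((i c₂).add (i (-c₂))) fun p => ?_
    simp only [aff]
    generalize κ - c₁ * p.1 = a
    have e : ∀ a b : ℝ, 2 * (max a 0) ^ 2 ≤ (max (a - b) 0) ^ 2 + (max (a + b) 0) ^ 2 := by
      intro a b
      have h1 := abs_le.1 (pos_sq_taylor a b)
      rcases le_total (a + b) 0 with h | h <;> rcases le_total (a - b) 0 with h' | h' <;>
      rcases le_total a 0 with h'' | h'' <;>
      simp only [h, h', h'', max_eq_left, max_eq_right] <;> nlinarith
    have := e a (c₂ * p.2)
    simpa using this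
  rw [VV_even κ c₁ c₂ h01] at h
  linarith

lemma VV_pos (hφ : Measurable φ) (h01 : ∀ x, φ x ∈ Set.Icc (0:ℝ) 1) (hnd : NonDeg φ)
    {κ : ℝ} (hκ : 0 < κ) (c₁ c₂ : ℝ) : 0 < VV φ κ c₁ c₂ := by
  refine lt_of_lt_of_le ?_ (VV_ge_zero h01 κ c₁ c₂)
  have := nuT_finite h01
  refine lt_of_le_of_ne (VV_nonneg _ _ _) fun h0 => ?_
  have hL : MemLp (fun t : ℝ => κ - c₁ * t) 2 (nuT φ) :=
    (memLp_const κ).sub ((id_L2_nu h01).const_mul c₁)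
  have e : VV φ κ c₁ 0 = ∫ t, (max (κ - c₁ * t) 0) ^ 2 ∂(nuT φ) := by
    unfold VV MM
    rw [integral_prod _ (isq (posL2 (aff_L2 h01 _ _ _)))]
    simp [aff]
  rw [e, eq_comm, integral_eq_zero_iff_of_nonneg (fun _ => sq_nonneg _) (isq (posL2 hL))] at h0
  have hae : ∀ᵐ t ∂(nuT φ), κ ≤ c₁ * t := by
    filter_upwards [h0] with t ht
    by_contra hc
    push Not at hc
    simp only [Pi.zero_apply] at ht
    rw [max_eq_left (by linarith)] at ht
    have : 0 < (κ - c₁ * t) ^ 2 := by apply pow_pos; linarith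
    linarith
  obtain ⟨hl, hr⟩ := hnd (κ / c₁)
  rcases le_or_gt 0 c₁ with hc | hc
  · have hi : Integrable (fun t => if t < κ / c₁ then (1:ℝ) else 0) (nuT φ) := by
      refine Integrable.of_bound (C := 1) (Measurable.aestronglyMeasurable ?_) (ae_of_all _ fun t => ?_)
      · exact Measurable.ite measurableSet_Iio measurable_const measurable_const
      · split_ifs <;> simp
    rw [← integral_nuT hφ h01 hi] at hl
    refine hl.ne' (integral_eq_zero_of_ae ?_)
    filter_upwards [hae] with t ht
    rcases hc.eq_or_lt with h | h
    · rw [← h] at ht; linarith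
    · rw [if_neg]; · rfl
      rw [lt_div_iff₀ h]; intro h; linarith
  · have hi : Integrable (fun t => if κ / c₁ < t then (1:ℝ) else 0) (nuT φ) := by
      refine Integrable.of_bound (C := 1) (Measurable.aestronglyMeasurable ?_) (ae_of_all _ fun t => ?_)
      · exact Measurable.ite measurableSet_Ioi measurable_const measurable_const
      · split_ifs <;> simp
    rw [← integral_nuT hφ h01 hi] at hr
    refine hr.ne' (integral_eq_zero_of_ae ?_)
    filter_upwards [hae] with t ht
    rw [if_neg]; · rfl
    rw [div_lt_iff_of_neg hc]; intro h; linarith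

lemma Fk_pos (hφ : Measurable φ) (h01 : ∀ x, φ x ∈ Set.Icc (0:ℝ) 1) (hnd : NonDeg φ)
    {κ : ℝ} (hκ : 0 < κ) (c₁ c₂ : ℝ) : 0 < Fk φ κ c₁ c₂ := by
  rw [Fk_eq hφ h01]
  exact Real.sqrt_pos.2 (VV_pos hφ h01 hnd hκ _ _)

lemma Fk_even (hφ : Measurable φ) (h01 : ∀ x, φ x ∈ Set.Icc (0:ℝ) 1) (κ c₁ c₂ : ℝ) :
    Fk φ κ c₁ (-c₂) = Fk φ κ c₁ c₂ := by
  rw [Fk_eq hφ h01, Fk_eq hφ h01, VV_even _ _ _ h01]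

lemma d1F_eq (hφ : Measurable φ) (h01 : ∀ x, φ x ∈ Set.Icc (0:ℝ) 1) (hnd : NonDeg φ)
    {κ : ℝ} (hκ : 0 < κ) (c₁ c₂ : ℝ) :
    Fk φ κ c₁ c₂ * d1F φ κ c₁ c₂ = -∫ p, max (aff κ c₁ c₂ p) 0 * p.1 ∂(MM φ) := by
  have hF := Fk_pos hφ h01 hnd hκ c₁ c₂
  have h := V_deriv (aff_L2 h01 κ c₁ c₂) (fst_L2 h01).neg c₁
  have e : (fun t => Fk φ κ t c₂) = fun t => Real.sqrt (∫ p, (max (aff κ c₁ c₂ p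
      + (t - c₁) * (-fun p : ℝ × ℝ => p.1) p) 0) ^ 2 ∂(MM φ)) := by
    ext t
    rw [Fk_eq hφ h01]
    unfold VV
    congr 2; ext p
    simp only [aff, Pi.neg_apply]
    congr 2; ring
  have e0 : ∫ p, (max (aff κ c₁ c₂ p + (c₁ - c₁) * (-fun p : ℝ × ℝ => p.1) p) 0) ^ 2 ∂(MM φ)
    = VV φ κ c₁ c₂ := by simp [VV]
  have h2 := h.sqrt (by rw [e0]; exact (VV_pos hφ h01 hnd hκ _ _).ne')
  rw [← e, e0, ← Fk_eq hφ h01] at h2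
  unfold d1F
  rw [h2.deriv]
  simp only [Pi.neg_apply, mul_neg, integral_neg]
  field_simp

lemma d2F_eq (hφ : Measurable φ) (h01 : ∀ x, φ x ∈ Set.Icc (0:ℝ) 1) (hnd : NonDeg φ)
    {κ : ℝ} (hκ : 0 < κ) (c₁ c₂ : ℝ) :
    Fk φ κ c₁ c₂ * d2F φ κ c₁ c₂ = -∫ p, max (aff κ c₁ c₂ p) 0 * p.2 ∂(MM φ) := by
  have hF := Fk_pos hφ h01 hnd hκ c₁ c₂
  have h := V_deriv (aff_L2 h01 κ c₁ c₂) (snd_L2 h01).neg c₂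
  have e : (fun t => Fk φ κ c₁ t) = fun t => Real.sqrt (∫ p, (max (aff κ c₁ c₂ p
      + (t - c₂) * (-fun p : ℝ × ℝ => p.2) p) 0) ^ 2 ∂(MM φ)) := by
    ext t
    rw [Fk_eq hφ h01]
    unfold VV
    congr 2; ext p
    simp only [aff, Pi.neg_apply]
    congr 2; ring
  have e0 : ∫ p, (max (aff κ c₁ c₂ p + (c₂ - c₂) * (-fun p : ℝ × ℝ => p.2) p) 0) ^ 2 ∂(MM φ)
    = VV φ κ c₁ c₂ := by simp [VV]
  have h2 := h.sqrt (by rw [e0]; exact (VV_pos hφ h01 hnd hκ _ _).ne')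
  rw [← e, e0, ← Fk_eq hφ h01] at h2
  unfold d2F
  rw [h2.deriv]
  simp only [Pi.neg_apply, mul_neg, integral_neg]
  field_simp

lemma Fk_sub (hφ : Measurable φ) (h01 : ∀ x, φ x ∈ Set.Icc (0:ℝ) 1) (hnd : NonDeg φ)
    {κ : ℝ} (hκ : 0 < κ) (c₁ c₂ e₁ e₂ : ℝ) :
    Fk φ κ c₁ c₂ + d1F φ κ c₁ c₂ * (e₁ - c₁) + d2F φ κ c₁ c₂ * (e₂ - c₂) ≤ Fk φ κ e₁ e₂ := by
  have hF := Fk_pos hφ h01 hnd hκ c₁ c₂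
  have h1 := d1F_eq hφ h01 hnd hκ c₁ c₂
  have h2 := d2F_eq hφ h01 hnd hκ c₁ c₂
  have hsq : Fk φ κ c₁ c₂ ^ 2 = VV φ κ c₁ c₂ := by
    rw [Fk_eq hφ h01, Real.sq_sqrt (VV_nonneg _ _ _)]
  have hcs := cs_int (posL2 (aff_L2 h01 κ c₁ c₂)) (posL2 (aff_L2 h01 κ e₁ e₂))
  have hU := posL2 (aff_L2 h01 κ c₁ c₂)
  have hm : ∫ p, max (aff κ c₁ c₂ p) 0 * aff κ e₁ e₂ p ∂(MM φ)
      ≤ ∫ p, max (aff κ c₁ c₂ p) 0 * max (aff κ e₁ e₂ p) 0 ∂(MM φ) := by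
    refine integral_mono (imul hU (aff_L2 h01 _ _ _)) (imul hU (posL2 (aff_L2 h01 _ _ _)))
      fun p => ?_
    exact mul_le_mul_of_nonneg_left (le_max_left _ _) (le_max_right _ _)
  have hl : ∫ p, max (aff κ c₁ c₂ p) 0 * aff κ e₁ e₂ p ∂(MM φ)
      = VV φ κ c₁ c₂ - (e₁ - c₁) * (∫ p, max (aff κ c₁ c₂ p) 0 * p.1 ∂(MM φ))
        - (e₂ - c₂) * (∫ p, max (aff κ c₁ c₂ p) 0 * p.2 ∂(MM φ)) := by
    have i1 := (imul hU (fst_L2 h01)).const_mul (e₁ - c₁)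
    have i2 := (imul hU (snd_L2 h01)).const_mul (e₂ - c₂)
    have i3 : Integrable (fun p => (max (aff κ c₁ c₂ p) 0) ^ 2
      - (e₁ - c₁) * (max (aff κ c₁ c₂ p) 0 * p.1)) (MM φ) := (isq hU).sub i1
    unfold VV
    rw [← integral_const_mul, ← integral_const_mul, ← integral_sub (isq hU) i1,
      ← integral_sub i3 i2]
    congr 1; ext p
    have : (max (aff κ c₁ c₂ p) 0) ^ 2 = max (aff κ c₁ c₂ p) 0 * aff κ c₁ c₂ p := by
      rcases le_total (aff κ c₁ c₂ p) 0 with h | h <;> simp [h, sq]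
    rw [this]
    simp only [aff]; ring
  change _ ≤ Real.sqrt (VV φ κ c₁ c₂) * Real.sqrt (VV φ κ e₁ e₂) at hcs
  rw [← Fk_eq hφ h01, ← Fk_eq hφ h01] at hcs
  have : Fk φ κ c₁ c₂ * (Fk φ κ c₁ c₂ + d1F φ κ c₁ c₂ * (e₁ - c₁) + d2F φ κ c₁ c₂ * (e₂ - c₂))
      ≤ Fk φ κ c₁ c₂ * Fk φ κ e₁ e₂ := by
    rw [hl] at hm
    have e : Fk φ κ c₁ c₂ * (Fk φ κ c₁ c₂ + d1F φ κ c₁ c₂ * (e₁ - c₁)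
        + d2F φ κ c₁ c₂ * (e₂ - c₂)) = Fk φ κ c₁ c₂ ^ 2
        + (Fk φ κ c₁ c₂ * d1F φ κ c₁ c₂) * (e₁ - c₁)
        + (Fk φ κ c₁ c₂ * d2F φ κ c₁ c₂) * (e₂ - c₂) := by ring
    rw [e, h1, h2, hsq]
    linarith
  exact le_of_mul_le_mul_left this hF

lemma d2F_nonneg (hφ : Measurable φ) (h01 : ∀ x, φ x ∈ Set.Icc (0:ℝ) 1) (hnd : NonDeg φ)
    {κ : ℝ} (hκ : 0 < κ) (c₁ : ℝ) {c₂ : ℝ} (hc : 0 < c₂) : 0 ≤ d2F φ κ c₁ c₂ := by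
  have h := Fk_sub hφ h01 hnd hκ c₁ c₂ c₁ (-c₂)
  rw [Fk_even hφ h01] at h
  by_contra hn
  push Not at hn
  nlinarith

lemma d2F_zero (hφ : Measurable φ) (h01 : ∀ x, φ x ∈ Set.Icc (0:ℝ) 1)
    (κ c₁ : ℝ) : d2F φ κ c₁ 0 = 0 := by
  unfold d2F
  have h := deriv_comp_neg (fun t => Fk φ κ c₁ t) 0
  simp only [Fk_even hφ h01, neg_zero] at h
  linarith

lemma Fk_cont (hφ : Measurable φ) (h01 : ∀ x, φ x ∈ Set.Icc (0:ℝ) 1) (hnd : NonDeg φ)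
    {κ : ℝ} (hκ : 0 < κ) : Continuous (fun p : ℝ × ℝ => Fk φ κ p.1 p.2) := by
  rw [← continuousOn_univ]
  refine ConvexOn.continuousOn isOpen_univ ⟨convex_univ, ?_⟩
  rintro ⟨x, y⟩ - ⟨u, v⟩ - a b ha hb hab
  simp only [Prod.smul_mk, smul_eq_mul, Prod.mk_add_mk]
  have h1 := Fk_sub hφ h01 hnd hκ (a * x + b * u) (a * y + b * v) x y
  have h2 := Fk_sub hφ h01 hnd hκ (a * x + b * u) (a * y + b * v) u v
  have h3 := mul_le_mul_of_nonneg_left h1 ha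
  have h4 := mul_le_mul_of_nonneg_left h2 hb
  obtain rfl : b = 1 - a := by linarith
  linarith

lemma Fk_gt (hφ : Measurable φ) (h01 : ∀ x, φ x ∈ Set.Icc (0:ℝ) 1) (hnd : NonDeg φ)
    {κ : ℝ} (hκ : 0 < κ) (c₁ : ℝ) {c₂ : ℝ} (hc : 0 ≤ c₂) :
    Real.sqrt (psiStar0 φ) * c₂ < Fk φ κ c₁ c₂ := by
  rcases hc.eq_or_lt with rfl | hc
  · simpa using Fk_pos hφ h01 hnd hκ c₁ 0
  have h1 : psiStar0 φ ≤ VV φ 0 (c₁ / c₂) 1 := by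
    have : (Fk φ 0 (c₁ / c₂) 1) ^ 2 = VV φ 0 (c₁ / c₂) 1 := by
      rw [Fk_eq hφ h01, Real.sq_sqrt (VV_nonneg _ _ _)]
    rw [← this]
    exact ciInf_le (f := fun c => (Fk φ 0 c 1) ^ 2) ⟨0, by rintro _ ⟨c, rfl⟩; positivity⟩ (c₁ / c₂)
  have h2 : VV φ 0 c₁ c₂ = c₂ ^ 2 * VV φ 0 (c₁ / c₂) 1 := by
    unfold VV
    rw [← integral_const_mul]
    congr 1; ext p
    rw [← mul_pow, mul_max_of_nonneg _ _ hc.le]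
    congr 2
    · simp only [aff]; field_simp; ring
    · simp
  have h3 : VV φ 0 c₁ c₂ < VV φ κ c₁ c₂ := by
    have i := fun κ => isq (posL2 (aff_L2 h01 κ c₁ c₂))
    have hp : ∀ p, (max (aff 0 c₁ c₂ p) 0) ^ 2 ≤ (max (aff κ c₁ c₂ p) 0) ^ 2 := by
      intro p
      refine pow_le_pow_left₀ (le_max_right _ _) (max_le_max_right _ ?_) 2
      simp only [aff]; linarith
    refine lt_of_le_of_ne (integral_mono (i 0) (i κ) hp) fun h => ?_
    have hpos := VV_pos hφ h01 hnd hκ c₁ c₂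
    have h5 := (integral_eq_iff_of_ae_le (i 0) (i κ) (ae_of_all _ hp)).1 h
    refine hpos.ne' (integral_eq_zero_of_ae ?_)
    filter_upwards [h5] with p hp
    by_contra hne
    have hpos : 0 < aff κ c₁ c₂ p := by
      by_contra hcon
      push Not at hcon
      rw [max_eq_right hcon] at hne
      simp at hne
    have : max (aff 0 c₁ c₂ p) 0 < max (aff κ c₁ c₂ p) 0 := by
      rw [max_eq_left hpos.le]
      refine max_lt ?_ hpos
      simp only [aff]; linarith
    have := pow_lt_pow_left₀ this (le_max_right _ _) (two_ne_zero)
    linarith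
  rw [Fk_eq hφ h01]
  refine Real.lt_sqrt_of_sq_lt ?_
  have h0 : 0 ≤ psiStar0 φ := Real.iInf_nonneg fun c => sq_nonneg _
  rw [mul_pow, Real.sq_sqrt h0]
  have : 0 < c₂ ^ 2 := by positivity
  nlinarith

lemma psiDown_eq (hφ : Measurable φ) (h01 : ∀ x, φ x ∈ Set.Icc (0:ℝ) 1)
    (μ : Measure (ℝ × ℝ)) (κ : ℝ) : psiDown φ μ κ = psiStar0 φ := by
  have h0 : 0 ≤ psiStar0 φ := Real.iInf_nonneg fun c => sq_nonneg _
  have h1 : psiPlus φ μ κ ≤ 0 := by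
    unfold psiPlus
    split_ifs
    · exact le_rfl
    · rw [d2F_zero hφ h01]; nlinarith [mul_nonneg (sq_nonneg (omegaMu μ)) (sq_nonneg (d1F φ κ (zetaMu μ) 0))]
  have h2 : psiMinus φ μ κ ≤ 0 := by
    unfold psiMinus
    split_ifs
    · exact le_rfl
    · rw [d2F_zero hφ h01]; nlinarith [mul_nonneg (sq_nonneg (omegaMu μ)) (sq_nonneg (d1F φ κ (-zetaMu μ) 0))]
  unfold psiDown
  rw [max_eq_left (h1.trans h0), max_eq_left (h2.trans h0)]

end Fprops

section Opt
variable {μ : Measure (ℝ × ℝ)}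

lemma int_lin4 {f₁ f₂ f₃ f₄ : ℝ × ℝ → ℝ} (h₁ : Integrable f₁ μ) (h₂ : Integrable f₂ μ)
    (h₃ : Integrable f₃ μ) (h₄ : Integrable f₄ μ) (α β γ δ : ℝ) :
    ∫ q, (α * f₁ q + β * f₂ q + γ * f₃ q + δ * f₄ q) ∂μ
      = α * ∫ q, f₁ q ∂μ + β * ∫ q, f₂ q ∂μ + γ * ∫ q, f₃ q ∂μ + δ * ∫ q, f₄ q ∂μ := by
  have g₁ := h₁.const_mul α
  have g₂ := h₂.const_mul β
  have g₃ := h₃.const_mul γ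
  have g₄ := h₄.const_mul δ
  have g₁₂ : Integrable (fun q => α * f₁ q + β * f₂ q) μ := g₁.add g₂
  have g₁₂₃ : Integrable (fun q => α * f₁ q + β * f₂ q + γ * f₃ q) μ := g₁₂.add g₃
  rw [integral_add g₁₂₃ g₄, integral_add g₁₂ g₃, integral_add g₁ g₂]
  simp only [integral_const_mul]

/-- Admissible pairs `(a, b)` (representing `h = a G + b`) with their summary statistics. -/
structure Feas (μ : Measure (ℝ × ℝ)) (a b : ℝ × ℝ → ℝ) (c₁ c₂ : ℝ) : Prop where
  ha : MemLp a 2 μ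
  hb : MemLp b 2 μ
  hc : 0 < c₂
  e1 : c₁ = ∫ q, Real.sqrt q.1 * b q * q.2 ∂μ
  e2 : c₁ ^ 2 + c₂ ^ 2 = ∫ q, ((Real.sqrt q.1 * a q) ^ 2 + (Real.sqrt q.1 * b q) ^ 2) ∂μ
  e3 : ∫ q, (a q ^ 2 + b q ^ 2) ∂μ ≤ 1

variable {xmin xmax : ℝ}

lemma rmul (hsupp : ∀ᵐ q ∂μ, q.1 ∈ Set.Icc xmin xmax) {a : ℝ × ℝ → ℝ} (ha : MemLp a 2 μ) :
    MemLp (fun q => Real.sqrt q.1 * a q) 2 μ := by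
  refine MemLp.of_le_mul (c := Real.sqrt xmax) ha ?_ ?_
  · have : AEStronglyMeasurable (fun q : ℝ × ℝ => Real.sqrt q.1) μ := by fun_prop
    exact this.mul ha.1
  · filter_upwards [hsupp] with q hq
    rw [norm_mul, Real.norm_of_nonneg (Real.sqrt_nonneg _)]
    exact mul_le_mul_of_nonneg_right (Real.sqrt_le_sqrt hq.2) (norm_nonneg _)

lemma w_L2 (hw2 : ∫ q, q.2 ^ 2 ∂μ = 1) : MemLp (fun q : ℝ × ℝ => q.2) 2 μ := by
  rw [memLp_two_iff_integrable_sq (by fun_prop)]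
  by_contra h
  rw [integral_undef h] at hw2
  norm_num at hw2

lemma int_P (hsupp : ∀ᵐ q ∂μ, q.1 ∈ Set.Icc xmin xmax) (hw2 : ∫ q, q.2 ^ 2 ∂μ = 1)
    {a b a' b' : ℝ × ℝ → ℝ} {c₁ c₂ c₁' c₂' : ℝ} (h : Feas μ a b c₁ c₂) (h' : Feas μ a' b' c₁' c₂') :
    Integrable (fun q => Real.sqrt q.1 * a q * (Real.sqrt q.1 * a' q)
      + (Real.sqrt q.1 * b q - c₁ * q.2) * (Real.sqrt q.1 * b' q - c₁' * q.2)) μ ∧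
    ∫ q, (Real.sqrt q.1 * a q * (Real.sqrt q.1 * a' q)
      + (Real.sqrt q.1 * b q - c₁ * q.2) * (Real.sqrt q.1 * b' q - c₁' * q.2)) ∂μ
    = ∫ q, (Real.sqrt q.1 * a q * (Real.sqrt q.1 * a' q)
      + Real.sqrt q.1 * b q * (Real.sqrt q.1 * b' q)) ∂μ - c₁ * c₁' := by
  have hw := w_L2 hw2
  have ra := rmul hsupp h.ha
  have rb := rmul hsupp h.hb
  have ra' := rmul hsupp h'.ha
  have rb' := rmul hsupp h'.hb
  refine ⟨(imul ra ra').add (imul (rb.sub (hw.const_mul c₁)) (rb'.sub (hw.const_mul c₁'))), ?_⟩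
  have i1 : Integrable (fun q => Real.sqrt q.1 * a q * (Real.sqrt q.1 * a' q)
      + Real.sqrt q.1 * b q * (Real.sqrt q.1 * b' q)) μ := (imul ra ra').add (imul rb rb')
  have := int_lin4 i1 (imul rb hw) (imul rb' hw) (isq hw) 1 (-c₁') (-c₁) (c₁ * c₁')
  rw [hw2, ← h.e1, ← h'.e1] at this
  calc _ = _ := by
        refine (integral_congr_ae (ae_of_all _ fun q => ?_)).trans this
        ring
    _ = _ := by ring

lemma int_S (hsupp : ∀ᵐ q ∂μ, q.1 ∈ Set.Icc xmin xmax) (hw2 : ∫ q, q.2 ^ 2 ∂μ = 1)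
    {a b : ℝ × ℝ → ℝ} {c₁ c₂ : ℝ} (h : Feas μ a b c₁ c₂) :
    ∫ q, (Real.sqrt q.1 * a q * (Real.sqrt q.1 * a q)
      + (Real.sqrt q.1 * b q - c₁ * q.2) * (Real.sqrt q.1 * b q - c₁ * q.2)) ∂μ = c₂ ^ 2 := by
  rw [(int_P hsupp hw2 h h).2]
  have := h.e2
  simp only [sq (Real.sqrt _ * _)] at this
  rw [← this]; ring

lemma cross_le (hsupp : ∀ᵐ q ∂μ, q.1 ∈ Set.Icc xmin xmax) (hw2 : ∫ q, q.2 ^ 2 ∂μ = 1)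
    {a b a' b' : ℝ × ℝ → ℝ} {c₁ c₂ c₁' c₂' : ℝ} (h : Feas μ a b c₁ c₂) (h' : Feas μ a' b' c₁' c₂') :
    ∫ q, (Real.sqrt q.1 * a q * (Real.sqrt q.1 * a' q)
      + Real.sqrt q.1 * b q * (Real.sqrt q.1 * b' q)) ∂μ - c₁ * c₁' ≤ c₂ * c₂' := by
  rw [← (int_P hsupp hw2 h h').2]
  set P := ∫ q, (Real.sqrt q.1 * a q * (Real.sqrt q.1 * a' q)
      + (Real.sqrt q.1 * b q - c₁ * q.2) * (Real.sqrt q.1 * b' q - c₁' * q.2)) ∂μ with hP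
  have h1 := int_lin4 (int_P hsupp hw2 h h).1 (int_P hsupp hw2 h' h').1 (int_P hsupp hw2 h h').1
    (integrable_zero _ _ _) (c₂' ^ 2) (c₂ ^ 2) (-2 * c₂ * c₂') 0
  rw [int_S hsupp hw2 h, int_S hsupp hw2 h', ← hP] at h1
  have h2 : 0 ≤ c₂' ^ 2 * c₂ ^ 2 + c₂ ^ 2 * c₂' ^ 2 + -2 * c₂ * c₂' * P := by
    have h3 : c₂' ^ 2 * c₂ ^ 2 + c₂ ^ 2 * c₂' ^ 2 + -2 * c₂ * c₂' * P =
      c₂' ^ 2 * c₂ ^ 2 + c₂ ^ 2 * c₂' ^ 2 + -2 * c₂ * c₂' * P + 0 * ∫ q : ℝ × ℝ, (0:ℝ) ∂μ := by ring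
    rw [h3]
    refine le_of_le_of_eq ?_ h1
    refine integral_nonneg fun q => ?_
    simp only [Pi.zero_apply]
    nlinarith [sq_nonneg (c₂' * (Real.sqrt q.1 * a q) - c₂ * (Real.sqrt q.1 * a' q)),
      sq_nonneg (c₂' * (Real.sqrt q.1 * b q - c₁ * q.2) - c₂ * (Real.sqrt q.1 * b' q - c₁' * q.2))]
  have hpos : 0 < c₂ * c₂' := mul_pos h.hc h'.hc
  by_contra hcon
  push Not at hcon
  nlinarith

/-- The stationarity identity tested against an admissible pair. -/
lemma stat_id [IsProbabilityMeasure μ] (hsupp : ∀ᵐ q ∂μ, q.1 ∈ Set.Icc xmin xmax)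
    (hw2 : ∫ q, q.2 ^ 2 ∂μ = 1)
    {a b a' b' : ℝ × ℝ → ℝ} {c₁ c₂ c₁' c₂' : ℝ} (h : Feas μ a b c₁ c₂) (h' : Feas μ a' b' c₁' c₂')
    {e σ τ A : ℝ}
    (hst : ∀ᵐ q ∂μ, (e * Real.sqrt q.1 ^ 2 + τ) * a q = -σ * Real.sqrt q.1 ∧
      (e * Real.sqrt q.1 ^ 2 + τ) * b q = -A * q.2 * Real.sqrt q.1) :
    e * ∫ q, (Real.sqrt q.1 * a q * (Real.sqrt q.1 * a' q)
      + Real.sqrt q.1 * b q * (Real.sqrt q.1 * b' q)) ∂μ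
      + τ * ∫ q, (a q * a' q + b q * b' q) ∂μ
      = -σ * (∫ q, Real.sqrt q.1 * a' q ∂μ) - A * c₁' := by
  have hw := w_L2 hw2
  have ra := rmul hsupp h.ha
  have rb := rmul hsupp h.hb
  have ra' := rmul hsupp h'.ha
  have rb' := rmul hsupp h'.hb
  have i1 : Integrable (fun q => Real.sqrt q.1 * a q * (Real.sqrt q.1 * a' q)
      + Real.sqrt q.1 * b q * (Real.sqrt q.1 * b' q)) μ := (imul ra ra').add (imul rb rb')
  have i2 : Integrable (fun q => a q * a' q + b q * b' q) μ :=
    (imul h.ha h'.ha).add (imul h.hb h'.hb)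
  have i3 : Integrable (fun q => Real.sqrt q.1 * a' q) μ := ra'.integrable (by norm_num)
  have z : Integrable (fun _ : ℝ × ℝ => (0:ℝ)) μ := integrable_zero _ _ _
  have h1 := int_lin4 i1 i2 z z e τ 0 0
  have h2 := int_lin4 i3 (imul rb' hw) z z (-σ) (-A) 0 0
  rw [← h'.e1] at h2
  have h3 : ∫ q, (e * (Real.sqrt q.1 * a q * (Real.sqrt q.1 * a' q)
      + Real.sqrt q.1 * b q * (Real.sqrt q.1 * b' q)) + τ * (a q * a' q + b q * b' q)
        + 0 * 0 + 0 * 0) ∂μ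
      = ∫ q, (-σ * (Real.sqrt q.1 * a' q) + -A * (Real.sqrt q.1 * b' q * q.2) + 0 * 0 + 0 * 0) ∂μ := by
    refine integral_congr_ae ?_
    filter_upwards [hst] with q hq
    linear_combination a' q * hq.1 + b' q * hq.2
  rw [h1, h2] at h3
  linarith

/-- Bound on the pairing. -/
lemma pair_le {a b a' b' : ℝ × ℝ → ℝ} {c₁ c₂ c₁' c₂' : ℝ} (h : Feas μ a b c₁ c₂)
    (h' : Feas μ a' b' c₁' c₂') : ∫ q, (a q * a' q + b q * b' q) ∂μ ≤ 1 := by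
  have i2 : Integrable (fun q => a q * a' q + b q * b' q) μ :=
    (imul h.ha h'.ha).add (imul h.hb h'.hb)
  have i3 : Integrable (fun q => a q ^ 2 + b q ^ 2) μ := (isq h.ha).add (isq h.hb)
  have i4 : Integrable (fun q => a' q ^ 2 + b' q ^ 2) μ := (isq h'.ha).add (isq h'.hb)
  have : ∫ q, 2 * (a q * a' q + b q * b' q) ∂μ
      ≤ ∫ q, ((a q ^ 2 + b q ^ 2) + (a' q ^ 2 + b' q ^ 2)) ∂μ := by
    refine integral_mono (i2.const_mul 2) (i3.add i4) fun q => ?_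
    simp only
    nlinarith [sq_nonneg (a q - a' q), sq_nonneg (b q - b' q)]
  rw [integral_const_mul, integral_add i3 i4] at this
  linarith [h.e3, h'.e3]

lemma feas_bound [IsProbabilityMeasure μ] (hsupp : ∀ᵐ q ∂μ, q.1 ∈ Set.Icc xmin xmax)
    (hxmax : 0 ≤ xmax)
    {a b : ℝ × ℝ → ℝ} {c₁ c₂ : ℝ} (h : Feas μ a b c₁ c₂) : c₁ ^ 2 + c₂ ^ 2 ≤ xmax := by
  have ra := rmul hsupp h.ha
  have rb := rmul hsupp h.hb
  rw [h.e2]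
  have i3 : Integrable (fun q => a q ^ 2 + b q ^ 2) μ := (isq h.ha).add (isq h.hb)
  calc _ ≤ ∫ q, xmax * (a q ^ 2 + b q ^ 2) ∂μ := by
        refine integral_mono_ae ((isq ra).add (isq rb)) (i3.const_mul _) ?_
        filter_upwards [hsupp] with q hq
        simp only [mul_pow]
        rcases le_total 0 q.1 with h0 | h0
        · rw [Real.sq_sqrt h0]
          nlinarith [hq.2, sq_nonneg (a q), sq_nonneg (b q)]
        · rw [Real.sqrt_eq_zero_of_nonpos h0]
          simp only [ne_eq, OfNat.ofNat_ne_zero, not_false_eq_true, zero_pow, zero_mul, add_zero]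
          positivity
    _ ≤ xmax := by
        rw [integral_const_mul]
        nlinarith [h.e3]

lemma feas_lin [IsProbabilityMeasure μ] (hsupp : ∀ᵐ q ∂μ, q.1 ∈ Set.Icc xmin xmax)
    (hw2 : ∫ q, q.2 ^ 2 ∂μ = 1)
    {a b : ℝ × ℝ → ℝ} {c₁ c₂ : ℝ} (h : Feas μ a b c₁ c₂) :
    -c₂ ≤ ∫ q, Real.sqrt q.1 * a q ∂μ := by
  have ra := rmul hsupp h.ha
  have h1 := cs_int ra (memLp_const (μ := μ) (-1 : ℝ))
  simp only [mul_neg, mul_one, integral_neg] at h1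
  have h2 : ∫ q, (Real.sqrt q.1 * a q) ^ 2 ∂μ ≤ c₂ ^ 2 := by
    rw [← int_S hsupp hw2 h]
    refine integral_mono (isq ra) (int_P hsupp hw2 h h).1 fun q => ?_
    simp only
    nlinarith [sq_nonneg (Real.sqrt q.1 * b q - c₁ * q.2)]
  have h3 : Real.sqrt (∫ q, (Real.sqrt q.1 * a q) ^ 2 ∂μ) ≤ c₂ :=
    (Real.sqrt_le_sqrt h2).trans (by rw [Real.sqrt_sq h.hc.le])
  simp at h1
  linarith

end Opt

section Main
variable {φ : ℝ → ℝ} {μ : Measure (ℝ × ℝ)} {xmin xmax : ℝ}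

lemma sol_spec [IsProbabilityMeasure μ] (hφ : Measurable φ) (h01 : ∀ x, φ x ∈ Set.Icc (0:ℝ) 1)
    (hnd : NonDeg φ) {κ : ℝ} (hκ : 0 < κ) (hxmin : 0 < xmin) (hxx : xmin ≤ xmax)
    (hsupp : ∀ᵐ q ∂μ, q.1 ∈ Set.Icc xmin xmax) (hw2 : ∫ q, q.2 ^ 2 ∂μ = 1)
    {ψ c₁ c₂ s : ℝ} (hψ : 0 < ψ) (hc : 0 < c₂) (hs : 0 < s) (hS : SolSysMu φ μ ψ κ c₁ c₂ s) :
    ∃ a b, Feas μ a b c₁ c₂ ∧ ∫ q, (a q ^ 2 + b q ^ 2) ∂μ = 1 ∧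
      ∀ᵐ q ∂μ, (c₂⁻¹ * d2F φ κ c₁ c₂ * Real.sqrt q.1 ^ 2 + Real.sqrt ψ * s) * a q
          = -Real.sqrt ψ * Real.sqrt q.1 ∧
        (c₂⁻¹ * d2F φ κ c₁ c₂ * Real.sqrt q.1 ^ 2 + Real.sqrt ψ * s) * b q
          = -(d1F φ κ c₁ c₂ - c₁ * c₂⁻¹ * d2F φ κ c₁ c₂) * q.2 * Real.sqrt q.1 := by
  have hd2 := d2F_nonneg hφ h01 hnd hκ c₁ hc
  obtain ⟨s1, s2, s3⟩ := hS
  set A := d1F φ κ c₁ c₂ - c₁ * c₂⁻¹ * d2F φ κ c₁ c₂ with hA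
  set e := c₂⁻¹ * d2F φ κ c₁ c₂ with he
  have he0 : 0 ≤ e := mul_nonneg (inv_nonneg.2 hc.le) hd2
  have hσ : 0 < Real.sqrt ψ := Real.sqrt_pos.2 hψ
  have hσ2 : Real.sqrt ψ ^ 2 = ψ := Real.sq_sqrt hψ.le
  set σ := Real.sqrt ψ with hσd
  set D : ℝ × ℝ → ℝ := fun q => e * Real.sqrt q.1 + σ * s * (Real.sqrt q.1)⁻¹ with hD
  have hxmax : 0 < xmax := hxmin.trans_le hxx
  set δ := σ * s * (Real.sqrt xmax)⁻¹ with hδ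
  have hδ0 : 0 < δ := by have := Real.sqrt_pos.2 hxmax; positivity
  have hDδ : ∀ᵐ q ∂μ, δ ≤ D q := by
    filter_upwards [hsupp] with q hq
    have h0 : 0 < q.1 := hxmin.trans_le hq.1
    have h1 : (Real.sqrt xmax)⁻¹ ≤ (Real.sqrt q.1)⁻¹ :=
      inv_anti₀ (Real.sqrt_pos.2 h0) (Real.sqrt_le_sqrt hq.2)
    have h2 : 0 ≤ e * Real.sqrt q.1 := mul_nonneg he0 (Real.sqrt_nonneg _)
    have h3 : δ ≤ σ * s * (Real.sqrt q.1)⁻¹ :=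
      mul_le_mul_of_nonneg_left h1 (mul_pos hσ hs).le
    simp only [hD]; linarith
  have hDm : Measurable D := by simp only [hD]; fun_prop
  have hw := w_L2 hw2
  refine ⟨fun q => -σ / D q, fun q => -A * q.2 / D q, ⟨?_, ?_, hc, ?_, ?_, ?_⟩, ?_, ?_⟩
  · refine MemLp.of_bound (Measurable.aestronglyMeasurable (by fun_prop)) (σ / δ) ?_
    filter_upwards [hDδ] with q hq
    rw [norm_div, norm_neg, Real.norm_of_nonneg hσ.le, Real.norm_of_nonneg (hδ0.le.trans hq)]
    exact div_le_div_of_nonneg_left hσ.le hδ0 hq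
  · refine MemLp.of_le_mul (c := |A| / δ) hw (Measurable.aestronglyMeasurable (by fun_prop)) ?_
    filter_upwards [hDδ] with q hq
    rw [norm_div, norm_mul, norm_neg, Real.norm_of_nonneg (hδ0.le.trans hq), Real.norm_eq_abs A,
      div_mul_eq_mul_div]
    exact div_le_div_of_nonneg_left (by positivity) hδ0 hq
  · rw [← neg_neg c₁, s1, ← integral_neg]
    refine integral_congr_ae (ae_of_all _ fun q => ?_)
    simp only [hD]; ring
  · rw [s2]
    refine integral_congr_ae ?_
    filter_upwards [hsupp] with q hq
    have h0 : 0 < q.1 := hxmin.trans_le hq.1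
    simp only [mul_pow, div_pow, neg_sq]
    rw [Real.sq_sqrt h0.le, hσ2]; ring
  · refine le_of_eq ?_
    conv_rhs => rw [s3]
    refine integral_congr_ae (ae_of_all _ fun q => ?_)
    simp only [mul_pow, div_pow, neg_sq]
    rw [hσ2]; ring
  · conv_rhs => rw [s3]
    refine integral_congr_ae (ae_of_all _ fun q => ?_)
    simp only [mul_pow, div_pow, neg_sq]
    rw [hσ2]; ring
  · filter_upwards [hsupp, hDδ] with q hq hq2
    have h0 : 0 < Real.sqrt q.1 := Real.sqrt_pos.2 (hxmin.trans_le hq.1)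
    have hD0 : D q ≠ 0 := (hδ0.trans_le hq2).ne'
    have : e * Real.sqrt q.1 ^ 2 + σ * s = D q * Real.sqrt q.1 := by
      simp only [hD]; field_simp
    rw [this]
    constructor
    · field_simp
    · field_simp

lemma T_facts [IsProbabilityMeasure μ] (hφ : Measurable φ) (h01 : ∀ x, φ x ∈ Set.Icc (0:ℝ) 1)
    (hnd : NonDeg φ) {κ : ℝ} (hκ : 0 < κ) (hxmin : 0 < xmin) (hxx : xmin ≤ xmax)
    (hsupp : ∀ᵐ q ∂μ, q.1 ∈ Set.Icc xmin xmax) (hw2 : ∫ q, q.2 ^ 2 ∂μ = 1)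
    {ψ c₁ c₂ s : ℝ} (hψ : 0 < ψ) (hc : 0 < c₂) (hs : 0 < s) (hS : SolSysMu φ μ ψ κ c₁ c₂ s) :
    (∃ a b, Feas μ a b c₁ c₂ ∧
      Tval φ ψ κ c₁ c₂ s = (Real.sqrt ψ)⁻¹ * Fk φ κ c₁ c₂ + ∫ q, Real.sqrt q.1 * a q ∂μ) ∧
    ∀ a' b' c₁' c₂', Feas μ a' b' c₁' c₂' →
      Tval φ ψ κ c₁ c₂ s ≤ (Real.sqrt ψ)⁻¹ * Fk φ κ c₁' c₂' + ∫ q, Real.sqrt q.1 * a' q ∂μ := by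
  have hd2 := d2F_nonneg hφ h01 hnd hκ c₁ hc
  have hσ : 0 < Real.sqrt ψ := Real.sqrt_pos.2 hψ
  obtain ⟨a, b, hF, hN, hst⟩ := sol_spec hφ h01 hnd hκ hxmin hxx hsupp hw2 hψ hc hs hS
  set e := c₂⁻¹ * d2F φ κ c₁ c₂ with he
  have he0 : 0 ≤ e := mul_nonneg (inv_nonneg.2 hc.le) hd2
  have hed : d2F φ κ c₁ c₂ = e * c₂ := by rw [he]; field_simp
  have hA : c₁ * c₂⁻¹ * d2F φ κ c₁ c₂ = c₁ * e := by rw [he]; ring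
  rw [hA] at hst
  refine ⟨⟨a, b, hF, ?_⟩, fun a' b' c₁' c₂' hF' => ?_⟩
  · have h1 := stat_id hsupp hw2 hF hF hst
    have h2 := hF.e2
    simp only [sq (Real.sqrt _ * _)] at h2
    have h3 : ∫ q, (a q * a q + b q * b q) ∂μ = 1 := by
      rw [← hN]; simp only [sq]
    rw [← h2, h3] at h1
    unfold Tval
    rw [hed]
    field_simp
    linarith
  · have h1 := stat_id hsupp hw2 hF hF' hst
    have h2 := cross_le hsupp hw2 hF hF'
    have h3 := pair_le hF hF'
    have h4 := Fk_sub hφ h01 hnd hκ c₁ c₂ c₁' c₂'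
    have h5 := mul_le_mul_of_nonneg_left h2 he0
    have h6 := mul_le_mul_of_nonneg_left h3 (mul_pos hσ hs).le
    unfold Tval
    rw [hed] at h4 ⊢
    have goal : Fk φ κ c₁ c₂ - c₁ * d1F φ κ c₁ c₂ - c₂ * (e * c₂) - Real.sqrt ψ * s
        ≤ Fk φ κ c₁' c₂' + Real.sqrt ψ * ∫ q, Real.sqrt q.1 * a' q ∂μ := by
      linarith
    have := mul_le_mul_of_nonneg_left goal (inv_pos.2 hσ).le
    have e1 : (Real.sqrt ψ)⁻¹ * (Fk φ κ c₁ c₂ - c₁ * d1F φ κ c₁ c₂ - c₂ * (e * c₂)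
        - Real.sqrt ψ * s) = (Real.sqrt ψ)⁻¹ * (Fk φ κ c₁ c₂ - c₁ * d1F φ κ c₁ c₂
          - c₂ * (e * c₂)) - s := by field_simp
    have e2 : (Real.sqrt ψ)⁻¹ * (Fk φ κ c₁' c₂' + Real.sqrt ψ * ∫ q, Real.sqrt q.1 * a' q ∂μ)
        = (Real.sqrt ψ)⁻¹ * Fk φ κ c₁' c₂' + ∫ q, Real.sqrt q.1 * a' q ∂μ := by field_simp
    rw [e1, e2] at this
    exact this

/-- Uniform gap above `ψ*(0)`. -/
lemma gap (hφ : Measurable φ) (h01 : ∀ x, φ x ∈ Set.Icc (0:ℝ) 1)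
    (hnd : NonDeg φ) {κ : ℝ} (hκ : 0 < κ) {R : ℝ} (hR : 0 < R) :
    ∃ ψ, psiStar0 φ < ψ ∧ ∀ c₁ c₂, |c₁| ≤ R → 0 ≤ c₂ → c₂ ≤ R →
      Real.sqrt ψ * c₂ < Fk φ κ c₁ c₂ := by
  have hK : IsCompact (Set.Icc (-R) R ×ˢ Set.Icc (0:ℝ) R) := isCompact_Icc.prod isCompact_Icc
  have hne : (Set.Icc (-R) R ×ˢ Set.Icc (0:ℝ) R).Nonempty :=
    ⟨(0, 0), by simp [hR.le]⟩
  have hcont : Continuous (fun p : ℝ × ℝ => Fk φ κ p.1 p.2 - Real.sqrt (psiStar0 φ) * p.2) :=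
    (Fk_cont hφ h01 hnd hκ).sub (by fun_prop)
  obtain ⟨p₀, hp₀, hmin⟩ := hK.exists_isMinOn hne hcont.continuousOn
  have hδ := sub_pos.2 (Fk_gt hφ h01 hnd hκ p₀.1 hp₀.2.1)
  set δ := Fk φ κ p₀.1 p₀.2 - Real.sqrt (psiStar0 φ) * p₀.2 with hδd
  have h0 : 0 ≤ psiStar0 φ := Real.iInf_nonneg fun c => sq_nonneg _
  have hη : 0 < δ / (2 * R) := by positivity
  refine ⟨(Real.sqrt (psiStar0 φ) + δ / (2 * R)) ^ 2, ?_, fun c₁ c₂ h1 h2 h3 => ?_⟩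
  · have h5 := Real.sq_sqrt h0
    nlinarith [Real.sqrt_nonneg (psiStar0 φ)]
  · rw [Real.sqrt_sq (by positivity)]
    have h4 := hmin (show (c₁, c₂) ∈ Set.Icc (-R) R ×ˢ Set.Icc (0:ℝ) R from ⟨abs_le.1 h1, h2, h3⟩)
    simp only [mem_ofPred_eq] at h4
    have h5 : δ / (2 * R) * c₂ ≤ δ / (2 * R) * R := mul_le_mul_of_nonneg_left h3 hη.le
    have h6 : δ / (2 * R) * R = δ / 2 := by field_simp
    rw [← hδd] at h4
    linarith

lemma feas_test [IsProbabilityMeasure μ] (hxmin : 0 < xmin)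
    (hsupp : ∀ᵐ q ∂μ, q.1 ∈ Set.Icc xmin xmax) :
    ∃ a b c₂, Feas μ a b 0 c₂ ∧ ∫ q, Real.sqrt q.1 * a q ∂μ < 0 := by
  have h1 : MemLp (fun _ : ℝ × ℝ => (1:ℝ)) 2 μ := memLp_const _
  have hr := rmul hsupp h1
  have hpos : 0 < ∫ q, Real.sqrt q.1 * (1:ℝ) ∂μ := by
    refine lt_of_lt_of_le (Real.sqrt_pos.2 hxmin) ?_
    calc Real.sqrt xmin = ∫ q, Real.sqrt xmin ∂μ := by simp
      _ ≤ _ := by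
        refine integral_mono_ae (integrable_const _) (hr.integrable (by norm_num)) ?_
        filter_upwards [hsupp] with q hq
        simpa using Real.sqrt_le_sqrt hq.1
  have hpos2 : 0 < ∫ q, (Real.sqrt q.1 * (1:ℝ)) ^ 2 ∂μ := by
    refine lt_of_lt_of_le hxmin ?_
    calc xmin = ∫ q, xmin ∂μ := by simp
      _ ≤ _ := by
        refine integral_mono_ae (integrable_const _) (isq hr) ?_
        filter_upwards [hsupp] with q hq
        have : 0 < q.1 := hxmin.trans_le hq.1
        simpa [Real.sq_sqrt this.le] using hq.1
  refine ⟨fun _ => -1, fun _ => 0, Real.sqrt (∫ q, (Real.sqrt q.1 * (1:ℝ)) ^ 2 ∂μ),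
    ⟨memLp_const _, memLp_const _, Real.sqrt_pos.2 hpos2, by simp, ?_, by simp⟩, ?_⟩
  · rw [Real.sq_sqrt hpos2.le]; simp
  · simp only [mul_neg, integral_neg]; linarith

end Main

/-- For fixed `κ > 0`, the map `ψ ↦ T(ψ,κ)` is strictly decreasing on `(ψ↓(κ), ∞)` and
satisfies `lim_{ψ→∞} T(ψ,κ) < 0 < lim_{ψ↓ψ↓(κ)} T(ψ,κ)` (limits taken in the extended reals). -/
theorem statement_8 (f : ℝ → ℝ) (hf : Continuous f) (hf01 : ∀ x, f x ∈ Set.Icc (0:ℝ) 1)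
    (ρ : ℝ) (hρ : 0 < ρ) (hnd : NonDeg (fun x => f (ρ * x)))
    (μ : Measure (ℝ × ℝ)) [IsProbabilityMeasure μ]
    (xmin xmax : ℝ) (hxmin : 0 < xmin) (hxx : xmin ≤ xmax)
    (hsupp : ∀ᵐ q ∂μ, q.1 ∈ Set.Icc xmin xmax)
    (hw2 : ∫ q, q.2 ^ 2 ∂μ = 1)
    (κ : ℝ) (hκ : 0 < κ)
    (sol : ℝ → ℝ × ℝ × ℝ)
    (hsol : ∀ ψ : ℝ, psiDown (fun x => f (ρ * x)) μ κ < ψ →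
      0 < (sol ψ).2.1 ∧ 0 < (sol ψ).2.2
        ∧ SolSysMu (fun x => f (ρ * x)) μ ψ κ (sol ψ).1 (sol ψ).2.1 (sol ψ).2.2
        ∧ ∀ c₁ c₂ s : ℝ, 0 < c₂ → 0 < s →
            SolSysMu (fun x => f (ρ * x)) μ ψ κ c₁ c₂ s → (c₁, c₂, s) = sol ψ) :
    StrictAntiOn (fun ψ : ℝ =>
        Tval (fun x => f (ρ * x)) ψ κ (sol ψ).1 (sol ψ).2.1 (sol ψ).2.2)
      (Set.Ioi (psiDown (fun x => f (ρ * x)) μ κ))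
    ∧ (∃ L : EReal,
        Tendsto (fun ψ : ℝ =>
            ((Tval (fun x => f (ρ * x)) ψ κ (sol ψ).1 (sol ψ).2.1 (sol ψ).2.2 : ℝ) : EReal))
          atTop (nhds L) ∧ L < 0)
    ∧ (∃ L : EReal,
        Tendsto (fun ψ : ℝ =>
            ((Tval (fun x => f (ρ * x)) ψ κ (sol ψ).1 (sol ψ).2.1 (sol ψ).2.2 : ℝ) : EReal))
          (nhdsWithin (psiDown (fun x => f (ρ * x)) μ κ)
            (Set.Ioi (psiDown (fun x => f (ρ * x)) μ κ))) (nhds L) ∧ 0 < L) := by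
  set φ : ℝ → ℝ := fun x => f (ρ * x) with hφd
  have hφ : Measurable φ := (hf.comp (continuous_const.mul continuous_id)).measurable
  have h01 : ∀ x, φ x ∈ Set.Icc (0:ℝ) 1 := fun x => hf01 _
  have hxmax : 0 < xmax := hxmin.trans_le hxx
  have hpd := psiDown_eq hφ h01 μ κ
  have h0 : 0 ≤ psiDown φ μ κ := by
    rw [hpd]; exact Real.iInf_nonneg fun c => sq_nonneg _
  set P := psiDown φ μ κ with hP
  set T : ℝ → ℝ := fun ψ => Tval φ ψ κ (sol ψ).1 (sol ψ).2.1 (sol ψ).2.2 with hT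
  have facts := fun ψ (h : P < ψ) => T_facts hφ h01 hnd hκ hxmin hxx hsupp hw2
    (h0.trans_lt h) (hsol ψ h).1 (hsol ψ h).2.1 (hsol ψ h).2.2.1
  have anti : StrictAntiOn T (Set.Ioi P) := by
    intro ψ h ψ' h' hlt
    obtain ⟨⟨a, b, hF, hv⟩, -⟩ := facts ψ h
    have h1 := (facts ψ' h').2 _ _ _ _ hF
    refine lt_of_le_of_lt h1 ?_
    simp only [hT]
    rw [hv]
    have hpos := Fk_pos hφ h01 hnd hκ (sol ψ).1 (sol ψ).2.1
    have hψ : 0 < ψ := h0.trans_lt h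
    have h2 : (Real.sqrt ψ')⁻¹ < (Real.sqrt ψ)⁻¹ :=
      inv_strictAnti₀ (Real.sqrt_pos.2 hψ) (Real.sqrt_lt_sqrt hψ.le hlt)
    have := mul_lt_mul_of_pos_right h2 hpos
    linarith
  refine ⟨anti, ?_, ?_⟩
  · obtain ⟨a, b, c₂, hF, hneg⟩ := feas_test hxmin hsupp
    obtain ⟨ψ₀, hψ₀, hlt⟩ : ∃ ψ₀, P < ψ₀ ∧ T ψ₀ < 0 := by
      have h1 : Tendsto (fun ψ : ℝ => (Real.sqrt ψ)⁻¹ * Fk φ κ 0 c₂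
          + ∫ q, Real.sqrt q.1 * a q ∂μ) atTop
          (𝓝 (0 * Fk φ κ 0 c₂ + ∫ q, Real.sqrt q.1 * a q ∂μ)) :=
        ((tendsto_inv_atTop_zero.comp Real.tendsto_sqrt_atTop).mul_const _).add_const _
      have h2 := h1.eventually_lt_const (u := 0) (by linarith)
      obtain ⟨ψ₀, h3, h4⟩ := (h2.and (eventually_gt_atTop P)).exists
      exact ⟨ψ₀, h4, lt_of_le_of_lt ((facts ψ₀ h4).2 _ _ _ _ hF) h3⟩
    have hanti : Antitone (fun ψ : ℝ => ((T (max ψ ψ₀) : ℝ) : EReal)) := by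
      intro x y hxy
      refine EReal.coe_le_coe_iff.2 (anti.antitoneOn ?_ ?_ (max_le_max_right _ hxy))
      · exact lt_of_lt_of_le hψ₀ (le_max_right _ _)
      · exact lt_of_lt_of_le hψ₀ (le_max_right _ _)
    refine ⟨_, (tendsto_atTop_iInf hanti).congr' ?_, ?_⟩
    · filter_upwards [eventually_ge_atTop ψ₀] with ψ hψ
      rw [max_eq_left hψ]
    · refine lt_of_le_of_lt (iInf_le _ ψ₀) ?_
      rw [max_self]
      exact_mod_cast hlt
  · have hR : 0 < Real.sqrt xmax := Real.sqrt_pos.2 hxmax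
    obtain ⟨ψ₀, hψ₀, hgap⟩ := gap hφ h01 hnd hκ hR
    rw [← hpd] at hψ₀
    have hpos : 0 < T ψ₀ := by
      obtain ⟨⟨a, b, hF, hv⟩, -⟩ := facts ψ₀ hψ₀
      simp only [hT]
      rw [hv]
      have h1 := feas_lin hsupp hw2 hF
      have h2 := feas_bound hsupp hxmax.le hF
      have h3 := hgap (sol ψ₀).1 (sol ψ₀).2.1
        (Real.abs_le_sqrt (by nlinarith [sq_nonneg (sol ψ₀).2.1])) hF.hc.le
        (Real.le_sqrt_of_sq_le (by nlinarith [sq_nonneg (sol ψ₀).1]))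
      have hσ : 0 < Real.sqrt ψ₀ := Real.sqrt_pos.2 (h0.trans_lt hψ₀)
      have h4 := mul_lt_mul_of_pos_left h3 (inv_pos.2 hσ)
      rw [inv_mul_cancel_left₀ hσ.ne'] at h4
      linarith
    have hA : AntitoneOn (fun ψ : ℝ => ((T ψ : ℝ) : EReal)) (Set.Ioi P) := fun x hx y hy hxy =>
      EReal.coe_le_coe_iff.2 (anti.antitoneOn hx hy hxy)
    refine ⟨_, hA.tendsto_nhdsGT (OrderTop.bddAbove _), ?_⟩
    refine lt_of_lt_of_le ?_ (le_sSup ⟨ψ₀, hψ₀, rfl⟩)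
    exact EReal.coe_pos.2 hpos

end MaxMargin
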